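/- r_5 = 11/5. That is, the maximum of ‖M‖_S over all 5×5 real matrices M with entries of absolute value at most 1 equals 11/5, and it is attained by the circulant matrix with diagonal entries 1 and off-diagonal entries −1. -/

import Mathlib

open scoped ComplexOrder

/-- The operator norm (induced by Euclidean norms) of a complex matrix. -/
noncomputable def Matrix.copNorm {m n : Type*} [Fintype m] [Fintype n] [DecidableEq n]
    (M : Matrix m n ℂ) : ℝ :=
  ‖LinearMap.toContinuousLinearMap (Matrix.toEuclideanLin M)‖

/-- The operator norm (induced by Euclidean norms) of a real matrix. -/
noncomputable def Matrix.ropNorm {m n : Type*} [Fintype m] [Fintype n] [DecidableEq n]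
    (M : Matrix m n ℝ) : ℝ :=
  ‖LinearMap.toContinuousLinearMap (Matrix.toEuclideanLin M)‖

/-- The Schur norm of a complex square matrix: the supremum of `‖M ∘ C‖` over all
complex contractions `C`, where `∘` is the entrywise (Schur/Hadamard) product. -/
noncomputable def Matrix.schurNorm {n : Type*} [Fintype n] [DecidableEq n]
    (M : Matrix n n ℂ) : ℝ :=
  sSup {x | ∃ C : Matrix n n ℂ, Matrix.copNorm C ≤ 1 ∧ x = Matrix.copNorm (Matrix.hadamard M C)}

/-- `rSchur n`: the supremum of Schur norms of `n × n` real matrices whose entries all have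
absolute value at most `1`. -/
noncomputable def rSchur (n : ℕ) : ℝ :=
  sSup {x | ∃ M : Matrix (Fin n) (Fin n) ℝ, (∀ i j, |M i j| ≤ 1) ∧
    x = Matrix.schurNorm (M.map Complex.ofReal)}

/-!
If `M i j = ⟪x i, y j⟫` then `‖M‖_S ≤ (max ‖x i‖) (max ‖y j‖)`, so an upper bound is certified by
a factorization of `M`. Since `‖·‖_S` is convex, only sign matrices need to be factored.

Two rows of a `5 × 5` sign matrix have an odd inner product. If some two of them have inner product
at least `3` in absolute value, they agree up to a sign outside one column, and a modification of
the trivial factorization `M = 1 * M` in those two rows gives `11 / 5`. Otherwise all inner products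
are `±1`; for three rows `u, v, w` the sum `⟨u, v⟩ + ⟨v, w⟩ + ⟨w, u⟩` is `3` modulo `4`, which forces
`M Mᵀ = 4 + s sᵀ` for a sign vector `s`. Then `Mᵀ M = 4 + p pᵀ / 9` with `p = Mᵀ s`, and its
diagonal gives `p j = ±3`: every column is correlated with `s`. Splitting off the direction `s` from
every column again gives `11 / 5`.

For the lower bound, the matrix `2 - J` is multiplied entrywise with the Householder reflection
`1 - (2 / 5) J`.
-/

section SchurNorm

open Matrix
open scoped Matrix.Norms.L2Operator ComplexInnerProductSpace

variable {m n κ : Type*} [Fintype m] [Fintype n] [DecidableEq n] [Fintype κ] {M : Matrix n n ℂ}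

theorem copNorm_eq_l2_opNorm (A : Matrix m n ℂ) : A.copNorm = ‖A‖ := rfl

theorem bddAbove_copNorm_hadamard (M : Matrix n n ℂ) :
    BddAbove {x | ∃ C : Matrix n n ℂ, C.copNorm ≤ 1 ∧ x = (M ⊙ C).copNorm} := by
  have hcont : Continuous fun C : Matrix n n ℂ => ‖M ⊙ C‖ :=
    (continuous_matrix fun i j => continuous_const.mul (continuous_id.matrix_elem i j)).norm
  refine ((isCompact_closedBall (0 : Matrix n n ℂ) 1).bddAbove_image hcont.continuousOn).mono ?_
  rintro _ ⟨C, hC, rfl⟩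
  exact ⟨C, mem_closedBall_zero_iff.mpr hC, rfl⟩

theorem copNorm_hadamard_le_schurNorm (M : Matrix n n ℂ) {C : Matrix n n ℂ}
    (hC : C.copNorm ≤ 1) : (M ⊙ C).copNorm ≤ M.schurNorm :=
  le_csSup (bddAbove_copNorm_hadamard M) ⟨C, hC, rfl⟩

theorem schurNorm_le_iff {t : ℝ} :
    M.schurNorm ≤ t ↔ ∀ C : Matrix n n ℂ, C.copNorm ≤ 1 → (M ⊙ C).copNorm ≤ t := by
  refine ⟨fun h C hC => (copNorm_hadamard_le_schurNorm M hC).trans h, fun h => ?_⟩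
  refine csSup_le ⟨_, 0, by simp [copNorm_eq_l2_opNorm], rfl⟩ ?_
  rintro _ ⟨C, hC, rfl⟩
  exact h C hC

theorem convex_schurNorm_le (t : ℝ) : Convex ℝ {M : Matrix n n ℂ | M.schurNorm ≤ t} := by
  intro M hM N hN a b ha hb hab
  simp only [Set.mem_ofPred_eq, schurNorm_le_iff, copNorm_eq_l2_opNorm] at hM hN ⊢
  intro C hC
  rw [add_hadamard, smul_hadamard, smul_hadamard]
  exact mem_closedBall_zero_iff.mp <| convex_closedBall (0 : Matrix n n ℂ) t
    (mem_closedBall_zero_iff.mpr (hM C hC)) (mem_closedBall_zero_iff.mpr (hN C hC)) ha hb hab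

theorem sum_sq_norm_sum_smul_le (C : Matrix m n ℂ) (w : n → EuclideanSpace ℂ κ) :
    ∑ i, ‖∑ j, C i j • w j‖ ^ 2 ≤ C.copNorm ^ 2 * ∑ j, ‖w j‖ ^ 2 := by
  have hcoord (k : κ) :
      ∑ i, ‖∑ j, C i j * w j k‖ ^ 2 ≤ C.copNorm ^ 2 * ∑ j, ‖w j k‖ ^ 2 := by
    have h := l2_opNorm_mulVec C (WithLp.toLp 2 fun j => w j k)
    have h' := pow_le_pow_left₀ (norm_nonneg _) h 2
    rwa [mul_pow, EuclideanSpace.norm_sq_eq, EuclideanSpace.norm_sq_eq] at h'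
  calc ∑ i, ‖∑ j, C i j • w j‖ ^ 2
      = ∑ k, ∑ i, ‖∑ j, C i j * w j k‖ ^ 2 := by
        rw [Finset.sum_comm]
        simp [EuclideanSpace.norm_sq_eq]
    _ ≤ ∑ k, C.copNorm ^ 2 * ∑ j, ‖w j k‖ ^ 2 := Finset.sum_le_sum fun k _ => hcoord k
    _ = C.copNorm ^ 2 * ∑ j, ‖w j‖ ^ 2 := by
        rw [← Finset.mul_sum, Finset.sum_comm]
        simp [EuclideanSpace.norm_sq_eq]

theorem schurNorm_le_of_eq_inner {x y : n → EuclideanSpace ℂ κ} {a b : ℝ} (ha : 0 ≤ a)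
    (hb : 0 ≤ b) (hM : ∀ i j, M i j = ⟪x i, y j⟫) (hx : ∀ i, ‖x i‖ ≤ a) (hy : ∀ j, ‖y j‖ ≤ b) :
    M.schurNorm ≤ a * b := by
  refine schurNorm_le_iff.mpr fun C hC =>
    ContinuousLinearMap.opNorm_le_bound _ (mul_nonneg ha hb) fun v => ?_
  have hrow (i : n) : ((M ⊙ C) *ᵥ v) i = ⟪x i, ∑ j, C i j • v j • y j⟫ := by
    simp only [mulVec, dotProduct, hadamard_apply, hM, inner_sum, inner_smul_right]
    exact Finset.sum_congr rfl fun j _ => by ring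
  refine le_of_sq_le_sq ?_ (by positivity)
  calc ‖WithLp.toLp 2 ((M ⊙ C) *ᵥ v)‖ ^ 2
      = ∑ i, ‖⟪x i, ∑ j, C i j • v j • y j⟫‖ ^ 2 := by
        simp only [EuclideanSpace.norm_sq_eq, hrow]
    _ ≤ ∑ i, (a * ‖∑ j, C i j • v j • y j‖) ^ 2 := by
        gcongr with i
        exact (norm_inner_le_norm _ _).trans (by gcongr; exact hx i)
    _ = a ^ 2 * ∑ i, ‖∑ j, C i j • v j • y j‖ ^ 2 := by simp only [mul_pow, Finset.mul_sum]
    _ ≤ a ^ 2 * (1 ^ 2 * ∑ j, ‖v j • y j‖ ^ 2) := by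
        gcongr
        refine (sum_sq_norm_sum_smul_le C _).trans ?_
        gcongr
        exact norm_nonneg C
    _ ≤ a ^ 2 * (1 ^ 2 * ∑ j, (‖v j‖ * b) ^ 2) := by
        gcongr with j
        rw [norm_smul]
        gcongr
        exact hy j
    _ = (a * b * ‖v‖) ^ 2 := by
        simp only [mul_pow, ← Finset.sum_mul, EuclideanSpace.norm_sq_eq]
        ring

theorem schurNorm_map_ofReal_le_of_eq_dotProduct {M : Matrix n n ℝ} {d : κ → ℝ}
    {X Y : Matrix n κ ℝ} {t : ℝ} (ht : 0 ≤ t) (hd : ∀ k, 0 ≤ d k)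
    (hM : ∀ i j, M i j = X i ⬝ᵥ (d * Y j)) (hX : ∀ i, X i ⬝ᵥ (d * X i) ≤ t)
    (hY : ∀ j, Y j ⬝ᵥ (d * Y j) ≤ t) : (M.map Complex.ofReal).schurNorm ≤ t := by
  let scaled (Z : Matrix n κ ℝ) (i : n) : EuclideanSpace ℂ κ :=
    WithLp.toLp 2 fun k => ((√(d k) * Z i k : ℝ) : ℂ)
  have norm_scaled_le {Z : Matrix n κ ℝ} (hZ : ∀ i, Z i ⬝ᵥ (d * Z i) ≤ t) (i : n) :
      ‖scaled Z i‖ ≤ √t := by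
    refine Real.le_sqrt_of_sq_le (le_of_eq_of_le ?_ (hZ i))
    simp only [scaled, EuclideanSpace.norm_sq_eq, Complex.norm_real, Real.norm_eq_abs, sq_abs,
      mul_pow, Real.sq_sqrt (hd _), dotProduct, Pi.mul_apply]
    exact Finset.sum_congr rfl fun k _ => by ring
  rw [← Real.mul_self_sqrt ht]
  refine schurNorm_le_of_eq_inner (x := scaled X) (y := scaled Y) (Real.sqrt_nonneg t)
    (Real.sqrt_nonneg t) (fun i j => ?_) (norm_scaled_le hX) (norm_scaled_le hY)
  simp only [scaled, map_apply, hM, dotProduct, Pi.mul_apply, PiLp.inner_apply,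
    RCLike.inner_apply, Complex.conj_ofReal, ← Complex.ofReal_mul, ← Complex.ofReal_sum]
  congr 1
  refine Finset.sum_congr rfl fun k _ => ?_
  linear_combination (-X i k * Y j k) * Real.mul_self_sqrt (hd k)

end SchurNorm

section SignMatrices

open Matrix

theorem schurNorm_le_of_forall_sign {n : Type*} [Fintype n] [DecidableEq n] {t : ℝ}
    (hsign : ∀ S : Matrix n n ℝ, (∀ i j, S i j ^ 2 = 1) →
      (S.map Complex.ofReal).schurNorm ≤ t)
    {M : Matrix n n ℝ} (hM : ∀ i j, |M i j| ≤ 1) : (M.map Complex.ofReal).schurNorm ≤ t := by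
  let signs : Set (n → n → ℝ) := Set.univ.pi fun _ => Set.univ.pi fun _ => {-1, 1}
  have hmem : (fun i j => M i j) ∈ convexHull ℝ signs := by
    simp only [signs, convexHull_pi]
    intro i _ j _
    rw [convexHull_pair, segment_eq_Icc (by norm_num)]
    exact abs_le.mp (hM i j)
  have hconv : Convex ℝ {S : n → n → ℝ | ((of S).map Complex.ofReal).schurNorm ≤ t} :=
    (convex_schurNorm_le t).linear_preimage Complex.ofRealLI.toLinearMap.mapMatrix
  refine convexHull_min (fun S hS => hsign (of S) fun i j => ?_) hconv hmem
  exact sq_eq_one_iff.mpr (by simpa [or_comm] using hS i trivial j trivial)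

end SignMatrices

section ColumnFactorization

open Matrix

variable {n κ : Type*} [Fintype n] [DecidableEq n] [Fintype κ] {M : Matrix n n ℝ}

theorem schurNorm_map_ofReal_le_of_forall_column {α t : ℝ} {s : n → ℝ} {d : κ → ℝ}
    {B : Matrix n κ ℝ} (ht : 0 ≤ t) (hα : 0 ≤ α) (hd : ∀ k, 0 ≤ d k)
    (hrow : ∀ i, α * s i ^ 2 + B i ⬝ᵥ (d * B i) ≤ t)
    (hcol : ∀ j, ∃ (u : ℝ) (w : κ → ℝ),
      (∀ i, M i j = α * s i * u + (B *ᵥ (d * w)) i) ∧ α * u ^ 2 + w ⬝ᵥ (d * w) ≤ t) :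
    (M.map Complex.ofReal).schurNorm ≤ t := by
  choose u w hM hw using hcol
  have hoption (a b c : ℝ) (x y z : κ → ℝ) :
      (fun o : Option κ => o.elim a x) ⬝ᵥ
        ((fun o : Option κ => o.elim b y) * fun o : Option κ => o.elim c z) =
      b * a * c + x ⬝ᵥ (y * z) := by
    simp only [dotProduct, Fintype.sum_option, Pi.mul_apply, Option.elim]
    ring
  refine schurNorm_map_ofReal_le_of_eq_dotProduct (d := fun o : Option κ => o.elim α d)
    (X := of fun i o => o.elim (s i) (B i)) (Y := of fun j o => o.elim (u j) (w j)) ht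
    (Option.forall.mpr ⟨hα, hd⟩) (fun i j => ?_) (fun i => ?_) fun j => ?_
  · exact (hM j i).trans (hoption (s i) α (u j) (B i) d (w j)).symm
  · exact (hoption (s i) α (s i) (B i) d (B i)).trans_le (by linarith [hrow i])
  · exact (hoption (u j) α (u j) (w j) d (w j)).trans_le (by linarith [hw j])

theorem schurNorm_map_ofReal_le_of_le_sq_vecMul {s : n → ℝ} (hcard : 4 ≤ Fintype.card n)
    (hM : ∀ i j, M i j ^ 2 = 1) (hs : ∀ i, s i ^ 2 = 1)
    (hcorr : ∀ j, ((Fintype.card n : ℝ) - 2) ^ 2 ≤ (s ᵥ* M) j ^ 2) :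
    (M.map Complex.ofReal).schurNorm ≤ 3 - 4 / Fintype.card n := by
  have hN : (4 : ℝ) ≤ Fintype.card n := by exact_mod_cast hcard
  set N : ℝ := (Fintype.card n : ℝ)
  set p : n → ℝ := s ᵥ* M with hp
  have hα : 0 ≤ 1 - 4 / N := sub_nonneg.mpr ((div_le_one (by linarith)).mpr hN)
  -- Subtracting from each column a suitable multiple of `s` shortens it; the weights are such that
  -- all rows attain the bound, and so do the columns with `(s ᵥ* M) j ^ 2 = (N - 2) ^ 2`.
  refine schurNorm_map_ofReal_le_of_forall_column (α := 1 - 4 / N) (s := s) (d := fun _ => 2)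
    (B := (1 : Matrix n n ℝ)) (by linarith) hα (fun _ => two_pos.le) (fun i => ?_) fun j => ?_
  · change (1 - 4 / N) * s i ^ 2 +
      ((1 : Matrix n n ℝ) *ᵥ ((fun _ => 2) * (1 : Matrix n n ℝ) i)) i ≤ 3 - 4 / N
    rw [one_mulVec, Pi.mul_apply, one_apply_eq, hs]
    linarith
  let c : ℝ := (1 - 4 / N) * p j / (N - 2)
  refine ⟨p j / (N - 2), fun l => (M l j - c * s l) / 2, fun i => ?_, ?_⟩
  · simp only [one_mulVec, Pi.mul_apply, c]
    ring
  have hres : ∑ l, (M l j - c * s l) ^ 2 = N - 2 * c * p j + c ^ 2 * N := by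
    have hterm (l : n) : (M l j - c * s l) ^ 2 = 1 - 2 * c * (s l * M l j) + c ^ 2 := by
      linear_combination hM l j + c ^ 2 * hs l
    simp only [hterm, Finset.sum_add_distrib, Finset.sum_sub_distrib, ← Finset.mul_sum]
    simp only [Finset.sum_const, Finset.card_univ, nsmul_eq_mul, hp, vecMul, dotProduct, N]
    ring
  have hw : (fun l => (M l j - c * s l) / 2) ⬝ᵥ
      ((fun _ => 2) * fun l => (M l j - c * s l) / 2) = (N - 2 * c * p j + c ^ 2 * N) / 2 := by
    rw [← hres, Finset.sum_div]
    exact Finset.sum_congr rfl fun l _ => by simp only [Pi.mul_apply]; ring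
  calc (1 - 4 / N) * (p j / (N - 2)) ^ 2 + _
      = N / 2 - (1 - 4 / N) / (2 * (N - 2)) * p j ^ 2 := by
        rw [hw]
        simp only [c]
        have : N - 2 ≠ 0 := by linarith
        field_simp
        ring
    _ ≤ N / 2 - (1 - 4 / N) / (2 * (N - 2)) * (N - 2) ^ 2 :=
        sub_le_sub_left (mul_le_mul_of_nonneg_left (hcorr j) (div_nonneg hα (by linarith))) _
    _ = 3 - 4 / N := by
        have : N - 2 ≠ 0 := by linarith
        field_simp
        ring

end ColumnFactorization

section NearlyProportionalRows

open Matrix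

variable {n : Type*} [DecidableEq n] {i k : n}

/-- Weights on the coordinates: `3 / 2` for the common direction of the rows `i` and `k` (stored
at `i`), `1 / 2` for their difference (stored at `k`), and `2` elsewhere. -/
noncomputable def pairWeight (i k : n) : n → ℝ :=
  Function.update (Function.update 2 k (1 / 2)) i (3 / 2)

/-- The identity matrix with rows `i` and `k` replaced by `eᵢ + eₖ` and `σ (eᵢ - eₖ)`: left
vectors adapted to a matrix whose row `k` is close to `σ` times its row `i`. -/
noncomputable def pairRows (i k : n) (σ : ℝ) : Matrix n n ℝ :=
  ((1 : Matrix n n ℝ).updateRow i (Pi.single i 1 + Pi.single k 1)).updateRow k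
    (σ • (Pi.single i 1 - Pi.single k 1))

theorem pairWeight_nonneg (i k l : n) : 0 ≤ pairWeight i k l := by
  simp only [pairWeight, Function.update_apply]
  split_ifs <;> norm_num

variable [Fintype n]

theorem pairRows_mulVec_pairWeight_mul (hik : i ≠ k) (σ : ℝ) (w : n → ℝ) :
    pairRows i k σ *ᵥ (pairWeight i k * w) =
      Function.update (Function.update (2 * w) i (3 / 2 * w i + 1 / 2 * w k)) k
        (σ * (3 / 2 * w i - 1 / 2 * w k)) := by
  ext m
  rcases eq_or_ne m k with rfl | hmk
  · rw [mulVec, pairRows, updateRow_self, smul_dotProduct, sub_dotProduct]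
    simp [pairWeight, hik.symm]
  rcases eq_or_ne m i with rfl | hmi
  · rw [mulVec, pairRows, updateRow_ne hmk, updateRow_self, add_dotProduct]
    simp [pairWeight, hmk, hmk.symm]
  · simp [pairRows, pairWeight, mulVec, one_eq_pi_single, hmk, hmi]

theorem pairRows_dotProduct_pairWeight_mul_self (hik : i ≠ k) {σ : ℝ} (hσ : σ ^ 2 = 1) (m : n) :
    pairRows i k σ m ⬝ᵥ (pairWeight i k * pairRows i k σ m) = 2 := by
  change (pairRows i k σ *ᵥ (pairWeight i k * pairRows i k σ m)) m = 2
  rw [pairRows_mulVec_pairWeight_mul hik]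
  rcases eq_or_ne m k with rfl | hmk
  · simp only [pairRows, updateRow_self, Pi.smul_apply, Pi.sub_apply, Function.update_self,
      Pi.single_eq_same, Pi.single_eq_of_ne hik, Pi.single_eq_of_ne hik.symm, smul_eq_mul]
    linear_combination 2 * hσ
  rcases eq_or_ne m i with rfl | hmi
  · simp only [pairRows, updateRow_ne hmk, updateRow_self, Pi.add_apply, Function.update_self,
      Function.update_of_ne hmk, Pi.single_eq_same, Pi.single_eq_of_ne hmk,
      Pi.single_eq_of_ne hmk.symm]
    norm_num
  · simp [pairRows, hmk, hmi]

theorem dotProduct_pairWeight_mul_self (hik : i ≠ k) {w : n → ℝ} {ε : ℝ}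
    (hw : ∀ l, l ≠ i → l ≠ k → w l ^ 2 = ε) :
    w ⬝ᵥ (pairWeight i k * w) =
      3 / 2 * w i ^ 2 + 1 / 2 * w k ^ 2 + 2 * (Fintype.card n - 2) * ε := by
  have hsum : ∑ l, (w l * (pairWeight i k l * w l) - 2 * ε) =
      (3 / 2 * w i ^ 2 - 2 * ε) + (1 / 2 * w k ^ 2 - 2 * ε) := by
    rw [Fintype.sum_eq_add i k hik fun l hl => ?_]
    · simp only [pairWeight, Function.update_self, Function.update_of_ne hik.symm]
      ring
    · simp only [pairWeight, Function.update_of_ne hl.1, Function.update_of_ne hl.2,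
        Pi.ofNat_apply]
      linear_combination 2 * hw l hl.1 hl.2
  rw [Finset.sum_sub_distrib, Finset.sum_const, Finset.card_univ, nsmul_eq_mul] at hsum
  simp only [dotProduct, Pi.mul_apply]
  linear_combination hsum

theorem exists_pair_factorization_of_eq {c : n → ℝ} {σ : ℝ} (hcard : Fintype.card n ≤ 5)
    (hik : i ≠ k) (hc : ∀ l, c l ^ 2 = 1) (hck : c k = σ * c i) :
    ∃ w, c = pairRows i k σ *ᵥ (pairWeight i k * w) ∧ w ⬝ᵥ (pairWeight i k * w) ≤ 11 / 5 := by
  have hcard' : (Fintype.card n : ℝ) ≤ 5 := by exact_mod_cast hcard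
  refine ⟨Function.update (Function.update (c / 2) k 0) i (2 / 3 * c i), ?_, ?_⟩
  · rw [pairRows_mulVec_pairWeight_mul hik]
    ext m
    rcases eq_or_ne m k with rfl | hmk
    · simp only [Function.update_self, Function.update_of_ne hik.symm, hck]
      ring
    rcases eq_or_ne m i with rfl | hmi
    · simp only [Function.update_self, Function.update_of_ne hmk, Function.update_of_ne hmk.symm]
      ring
    · simp only [Function.update_of_ne hmk, Function.update_of_ne hmi, Pi.mul_apply, Pi.div_apply,
        Pi.ofNat_apply]
      ring
  · rw [dotProduct_pairWeight_mul_self hik (ε := 1 / 4) fun l hli hlk => ?_]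
    · simp only [Function.update_self, Function.update_of_ne hik.symm, mul_pow, hc]
      linarith
    · simp only [Function.update_of_ne hli, Function.update_of_ne hlk, Pi.div_apply,
        Pi.ofNat_apply, div_pow, hc]
      norm_num

theorem exists_pair_factorization_of_eq_neg {c : n → ℝ} {σ : ℝ} (hcard : Fintype.card n ≤ 5)
    (hik : i ≠ k) (hc : ∀ l, c l ^ 2 = 1) (hck : c k = -(σ * c i)) :
    ∃ w, (1 / 2 : ℝ) • c = pairRows i k σ *ᵥ (pairWeight i k * w) ∧
      w ⬝ᵥ (pairWeight i k * w) ≤ 7 / 8 := by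
  have hcard' : (Fintype.card n : ℝ) ≤ 5 := by exact_mod_cast hcard
  refine ⟨Function.update (Function.update (c / 4) k (c i)) i 0, ?_, ?_⟩
  · rw [pairRows_mulVec_pairWeight_mul hik]
    ext m
    rcases eq_or_ne m k with rfl | hmk
    · simp only [Pi.smul_apply, smul_eq_mul, hck, Function.update_self,
        Function.update_of_ne hik.symm]
      ring
    rcases eq_or_ne m i with rfl | hmi
    · simp [hmk, hmk.symm]
    · simp only [Function.update_of_ne hmk, Function.update_of_ne hmi, Pi.mul_apply, Pi.div_apply,
        Pi.ofNat_apply, Pi.smul_apply, smul_eq_mul]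
      ring
  · rw [dotProduct_pairWeight_mul_self hik (ε := 1 / 16) fun l hli hlk => ?_]
    · simp only [Function.update_self, Function.update_of_ne hik.symm, hc]
      linarith
    · simp only [Function.update_of_ne hli, Function.update_of_ne hlk, Pi.div_apply,
        Pi.ofNat_apply, div_pow, hc]
      norm_num

theorem schurNorm_map_ofReal_le_of_nearly_proportional {M : Matrix n n ℝ} {σ : ℝ} {j₀ : n}
    (hcard : Fintype.card n ≤ 5) (hik : i ≠ k) (hM : ∀ l j, M l j ^ 2 = 1) (hσ : σ ^ 2 = 1)
    (hprop : ∀ j, j ≠ j₀ → M k j = σ * M i j) : (M.map Complex.ofReal).schurNorm ≤ 11 / 5 := by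
  -- The extra left vector is the exceptional column `j₀`. Its weight `1 / 5` raises the row norms
  -- from `2` to exactly `11 / 5`, and only column `j₀` itself uses it.
  refine schurNorm_map_ofReal_le_of_forall_column (α := 1 / 5) (s := fun l => M l j₀)
    (d := pairWeight i k) (B := pairRows i k σ) (by norm_num) (by norm_num)
    (pairWeight_nonneg i k) (fun l => ?_) fun j => ?_
  · rw [hM, pairRows_dotProduct_pairWeight_mul_self hik hσ]
    norm_num
  have hsign : M k j = σ * M i j ∨ M k j = -(σ * M i j) := by
    rw [← sq_eq_sq_iff_eq_or_eq_neg, mul_pow, hM, hM, hσ, one_mul]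
  by_cases hagree : M k j = σ * M i j
  · obtain ⟨w, hcol, hw⟩ :=
      exists_pair_factorization_of_eq (c := fun l => M l j) hcard hik (hM · j) hagree
    refine ⟨0, w, fun l => ?_, by linarith⟩
    rw [mul_zero, zero_add, ← hcol]
  · obtain rfl : j = j₀ := by_contra fun hne => hagree (hprop j hne)
    obtain ⟨w, hcol, hw⟩ := exists_pair_factorization_of_eq_neg (c := fun l => M l j) hcard hik
      (hM · j) (hsign.resolve_left hagree)
    refine ⟨5 / 2, w, fun l => ?_, by linarith⟩
    rw [← hcol, Pi.smul_apply, smul_eq_mul]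
    ring

end NearlyProportionalRows

section SignVectors

open Matrix

variable {m n : Type*} [Fintype n]

theorem exists_sum_dotProduct_eq_three_mul_card_add_four_mul {u v w : n → ℝ}
    (hu : ∀ j, u j ^ 2 = 1) (hv : ∀ j, v j ^ 2 = 1) (hw : ∀ j, w j ^ 2 = 1) :
    ∃ z : ℤ, u ⬝ᵥ v + v ⬝ᵥ w + w ⬝ᵥ u = 3 * Fintype.card n + 4 * z := by
  have hterm (j : n) : ∃ z : ℤ, u j * v j + v j * w j + w j * u j = 3 + 4 * z := by
    rcases sq_eq_one_iff.mp (hu j) with hu | hu <;> rcases sq_eq_one_iff.mp (hv j) with hv | hv <;>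
      rcases sq_eq_one_iff.mp (hw j) with hw | hw <;> rw [hu, hv, hw] <;>
      first | (refine ⟨0, ?_⟩; norm_num; done) | (refine ⟨-1, ?_⟩; norm_num)
  choose z hz using hterm
  refine ⟨∑ j, z j, ?_⟩
  simp only [dotProduct, ← Finset.sum_add_distrib, hz]
  simp [Finset.sum_add_distrib, Finset.mul_sum, mul_comm]

theorem exists_dotProduct_eq_card_add_two_mul {u v : n → ℝ} (hu : ∀ j, u j ^ 2 = 1)
    (hv : ∀ j, v j ^ 2 = 1) : ∃ z : ℤ, u ⬝ᵥ v = Fintype.card n + 2 * z := by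
  obtain ⟨z, hz⟩ := exists_sum_dotProduct_eq_three_mul_card_add_four_mul hu hv hu
  have huu : u ⬝ᵥ u = Fintype.card n := by simp [dotProduct, ← sq, hu]
  exact ⟨z, by linarith [dotProduct_comm u v]⟩

theorem exists_forall_ne_eq_of_card_sub_four_lt [Nonempty n] {u v : n → ℝ}
    (hu : ∀ j, u j ^ 2 = 1) (hv : ∀ j, v j ^ 2 = 1) (huv : Fintype.card n - 4 < u ⬝ᵥ v) :
    ∃ j₀, ∀ j, j ≠ j₀ → v j = u j := by
  classical
  by_contra! hdiff
  obtain ⟨a, -, ha⟩ := hdiff (Classical.arbitrary n)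
  obtain ⟨b, hba, hb⟩ := hdiff a
  have hdefect {j : n} (hj : v j ≠ u j) : 1 - u j * v j = 2 := by
    rw [(sq_eq_sq_iff_eq_or_eq_neg.mp ((hv j).trans (hu j).symm)).resolve_left hj]
    linear_combination hu j
  have hdefect_nonneg (j : n) : 0 ≤ 1 - u j * v j := by
    nlinarith [hu j, hv j, sq_nonneg (u j - v j)]
  have hle : ∑ j ∈ {a, b}, (1 - u j * v j) ≤ ∑ j, (1 - u j * v j) :=
    Finset.sum_le_univ_sum_of_nonneg hdefect_nonneg
  rw [Finset.sum_pair hba.symm, hdefect ha, hdefect hb] at hle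
  simp only [Finset.sum_sub_distrib, Finset.sum_const, Finset.card_univ, nsmul_one] at hle
  linarith [show u ⬝ᵥ v = ∑ j, u j * v j from rfl]

theorem exists_forall_ne_eq_mul_of_card_sub_four_lt_abs [Nonempty n] {u v : n → ℝ}
    (hu : ∀ j, u j ^ 2 = 1) (hv : ∀ j, v j ^ 2 = 1) (huv : Fintype.card n - 4 < |u ⬝ᵥ v|) :
    ∃ σ : ℝ, σ ^ 2 = 1 ∧ ∃ j₀, ∀ j, j ≠ j₀ → v j = σ * u j := by
  have hsigned {σ : ℝ} (hσ : σ ^ 2 = 1) (h : Fintype.card n - 4 < σ * (u ⬝ᵥ v)) :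
      ∃ σ : ℝ, σ ^ 2 = 1 ∧ ∃ j₀, ∀ j, j ≠ j₀ → v j = σ * u j :=
    ⟨σ, hσ, exists_forall_ne_eq_of_card_sub_four_lt (u := σ • u)
      (by simp [mul_pow, hσ, hu]) hv (by simpa [smul_dotProduct] using h)⟩
  rcases lt_abs.mp huv with h | h
  · exact hsigned (one_pow 2) (by linarith)
  · exact hsigned (neg_one_sq.trans rfl) (by linarith)

theorem eq_mul_of_add_add_eq {a b c : ℝ} {z : ℤ} (ha : a ^ 2 = 1) (hb : b ^ 2 = 1)
    (hc : c ^ 2 = 1) (h : a + c + b = 3 + 4 * z) : c = a * b := by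
  rcases sq_eq_one_iff.mp ha with rfl | rfl <;> rcases sq_eq_one_iff.mp hb with rfl | rfl <;>
    rcases sq_eq_one_iff.mp hc with rfl | rfl <;> norm_num at h ⊢ <;> norm_cast at h <;> omega

/-- Once the signs of the rows are switched so that all have inner product `1` with a fixed row,
the congruence modulo `4` forces every other inner product to be `1`. -/
theorem exists_mul_transpose_eq_of_sq_dotProduct_eq_one [Nonempty m] [DecidableEq m]
    {M : Matrix m n ℝ} (hcard : Fintype.card n % 4 = 1) (hM : ∀ i j, M i j ^ 2 = 1)
    (hrows : ∀ i k, i ≠ k → (M i ⬝ᵥ M k) ^ 2 = 1) :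
    ∃ s : m → ℝ, (∀ i, s i ^ 2 = 1) ∧
      M * Mᵀ = ((Fintype.card n : ℝ) - 1) • 1 + vecMulVec s s := by
  let r := Classical.arbitrary m
  let s : m → ℝ := Function.update (fun i => M r ⬝ᵥ M i) r 1
  have hs (i : m) : s i ^ 2 = 1 := by
    rcases eq_or_ne i r with rfl | hi
    · simp [s]
    · simp [s, hi, hrows r i hi.symm]
  have hgram {i k : m} (hik : i ≠ k) : M i ⬝ᵥ M k = s i * s k := by
    rcases eq_or_ne i r with rfl | hi
    · simp [s, hik.symm]
    rcases eq_or_ne k r with rfl | hk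
    · simp [s, hik, dotProduct_comm]
    obtain ⟨z, hz⟩ :=
      exists_sum_dotProduct_eq_three_mul_card_add_four_mul (hM r) (hM i) (hM k)
    obtain ⟨q, hq⟩ : ∃ q, Fintype.card n = 4 * q + 1 := ⟨Fintype.card n / 4, by omega⟩
    have hmod : M r ⬝ᵥ M i + M i ⬝ᵥ M k + M r ⬝ᵥ M k = 3 + 4 * ((3 * q + z : ℤ) : ℝ) := by
      rw [hq] at hz
      push_cast at hz ⊢
      linarith [dotProduct_comm (M k) (M r)]
    simpa [s, hi, hk] using
      eq_mul_of_add_add_eq (hrows r i hi.symm) (hrows r k hk.symm) (hrows i k hik) hmod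
  refine ⟨s, hs, ?_⟩
  ext i k
  rcases eq_or_ne i k with rfl | hik
  · simp [mul_apply, ← sq, hM, vecMulVec_apply, hs]
  · simpa [hik, vecMulVec_apply, mul_apply'] using hgram hik

end SignVectors

section RankOneGram

open Matrix

variable {n : Type*} [Fintype n] [DecidableEq n]

theorem transpose_mul_self_of_mul_transpose_eq {K : Type*} [Field K] {M : Matrix n n K}
    {s : n → K} {c : K} (hc : c ≠ 0) (hcs : c + s ⬝ᵥ s ≠ 0)
    (hgram : M * Mᵀ = c • 1 + vecMulVec s s) :
    Mᵀ * M = c • 1 + (c + s ⬝ᵥ s)⁻¹ • vecMulVec (s ᵥ* M) (s ᵥ* M) := by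
  let R : Matrix n n K := 1 - (c + s ⬝ᵥ s)⁻¹ • vecMulVec s s
  have hright : M * (c⁻¹ • (Mᵀ * R)) = 1 := by
    rw [Matrix.mul_smul, ← Matrix.mul_assoc, hgram]
    simp only [R, mul_sub, add_mul, mul_one, Matrix.smul_mul, Matrix.mul_smul, one_mul,
      vecMulVec_mul_vecMulVec]
    ext i j
    simp only [vecMulVec_smul, Matrix.smul_apply, Matrix.sub_apply, Matrix.add_apply, smul_eq_mul,
      vecMulVec_apply]
    field_simp
    ring
  have hleft : c⁻¹ • (Mᵀ * R * M) = 1 := by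
    rw [← Matrix.smul_mul]
    exact mul_eq_one_comm.mp hright
  have hexpand : Mᵀ * R * M =
      Mᵀ * M - (c + s ⬝ᵥ s)⁻¹ • vecMulVec (s ᵥ* M) (s ᵥ* M) := by
    simp only [R, mul_sub, sub_mul, mul_one, Matrix.mul_smul, Matrix.smul_mul,
      mul_vecMulVec, vecMulVec_mul, mulVec_transpose]
  rw [← sub_eq_iff_eq_add, ← hexpand, ← hleft, smul_inv_smul₀ hc]

theorem sq_vecMul_eq_of_mul_transpose_eq {M : Matrix n n ℝ} {s : n → ℝ}
    (hcard : 1 < Fintype.card n) (hM : ∀ i j, M i j ^ 2 = 1) (hs : ∀ i, s i ^ 2 = 1)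
    (hgram : M * Mᵀ = ((Fintype.card n : ℝ) - 1) • 1 + vecMulVec s s) (j : n) :
    (s ᵥ* M) j ^ 2 = 2 * Fintype.card n - 1 := by
  have hN : (1 : ℝ) < Fintype.card n := by exact_mod_cast hcard
  have hss : s ⬝ᵥ s = Fintype.card n := by simp [dotProduct, ← sq, hs]
  have hdiag := congrFun₂ (transpose_mul_self_of_mul_transpose_eq (by linarith)
    (by rw [hss]; linarith) hgram) j j
  have hMj : (Mᵀ * M) j j = Fintype.card n := by simp [mul_apply, ← sq, hM]
  simp only [hMj, hss, Matrix.add_apply, Matrix.smul_apply, one_apply_eq, smul_eq_mul, mul_one,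
    vecMulVec_apply] at hdiag
  have : (Fintype.card n - 1 + Fintype.card n : ℝ) ≠ 0 := by linarith
  field_simp at hdiag
  linarith

end RankOneGram

section LowerBound

open Matrix
open scoped Matrix.Norms.L2Operator

variable {n : Type*} [Fintype n] [DecidableEq n]

theorem norm_le_copNorm_of_mulVec_eq_smul {A : Matrix n n ℂ} {μ : ℂ} {v : n → ℂ} (hv : v ≠ 0)
    (hAv : A *ᵥ v = μ • v) : ‖μ‖ ≤ A.copNorm := by
  have h : ‖WithLp.toLp 2 (A *ᵥ v)‖ ≤ ‖A‖ * ‖WithLp.toLp 2 v‖ := l2_opNorm_mulVec A _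
  rw [hAv, WithLp.toLp_smul, norm_smul] at h
  exact le_of_mul_le_mul_right h (norm_pos_iff.mpr (by simpa using hv))

/-- The test contraction is the Householder reflection `1 - (2 / N) J`; the all-ones vector is an
eigenvector of its Hadamard product with the given matrix. -/
theorem three_sub_four_div_card_le_schurNorm [Nonempty n] :
    3 - 4 / Fintype.card n ≤
      ((of fun i j : n => if i = j then (1 : ℝ) else -1).map Complex.ofReal).schurNorm := by
  set N : ℂ := (Fintype.card n : ℂ) with hN
  have hN0 : N ≠ 0 := by simp [hN]
  let J : Matrix n n ℂ := of fun _ _ => 1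
  let C : Matrix n n ℂ := 1 - (2 / N) • J
  have hJJ : J * J = N • J := by
    ext i j
    simp [J, mul_apply, hN]
  have hCstar : star C = C := by
    ext i j
    simp [C, J, hN, star_apply, one_apply, eq_comm]
  have hCC : C * C = 1 := by
    simp only [C, sub_mul, mul_sub, one_mul, mul_one, Matrix.smul_mul, Matrix.mul_smul, hJJ,
      smul_smul, div_mul_cancel₀ _ hN0]
    module
  have hunitary : C ∈ unitary (Matrix n n ℂ) := by simp [Unitary.mem_iff, hCstar, hCC]
  have hC : C.copNorm ≤ 1 := (CStarRing.norm_of_mem_unitary hunitary).le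
  refine le_trans ?_ (copNorm_hadamard_le_schurNorm _ hC)
  have heig := norm_le_copNorm_of_mulVec_eq_smul (v := 1) (μ := 3 - 4 / N)
    (A := (of fun i j : n => if i = j then (1 : ℝ) else -1).map Complex.ofReal ⊙ C)
    one_ne_zero ?_
  · refine (le_abs_self _).trans (le_of_eq_of_le ?_ heig)
    rw [← Real.norm_eq_abs, ← Complex.norm_real]
    simp [hN]
  · have hentry (i j : n) :
        ((of fun i j : n => if i = j then (1 : ℝ) else -1).map Complex.ofReal ⊙ C) i j =
          2 / N + if i = j then 1 - 4 / N else 0 := by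
      rcases eq_or_ne i j with rfl | hij
      · simp only [C, J, hadamard_apply, map_apply, of_apply, if_true, Complex.ofReal_one,
          Matrix.sub_apply, Matrix.smul_apply, one_apply_eq, smul_eq_mul]
        ring
      · simp [C, J, hij]
    ext i
    simp only [mulVec, dotProduct, hentry, Pi.one_apply, mul_one, Pi.smul_apply]
    simp only [Finset.sum_add_distrib, Finset.sum_const, Finset.card_univ, nsmul_eq_mul, ← hN,
      mul_div_cancel₀ _ hN0, Finset.sum_ite_eq, Finset.mem_univ, if_true, smul_eq_mul]
    ring

end LowerBound

section FiveByFive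

open Matrix

theorem schurNorm_map_ofReal_le_of_sign {S : Matrix (Fin 5) (Fin 5) ℝ}
    (hS : ∀ i j, S i j ^ 2 = 1) : (S.map Complex.ofReal).schurNorm ≤ 11 / 5 := by
  by_cases hnear : ∃ i k, i ≠ k ∧ 1 < |S i ⬝ᵥ S k|
  · obtain ⟨i, k, hik, hdot⟩ := hnear
    obtain ⟨σ, hσ, j₀, hprop⟩ :=
      exists_forall_ne_eq_mul_of_card_sub_four_lt_abs (hS i) (hS k) (by norm_num; exact hdot)
    exact schurNorm_map_ofReal_le_of_nearly_proportional (by simp) hik hS hσ hprop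
  · have hrows (i k : Fin 5) (hik : i ≠ k) : (S i ⬝ᵥ S k) ^ 2 = 1 := by
      obtain ⟨z, hz⟩ := exists_dotProduct_eq_card_add_two_mul (hS i) (hS k)
      have habs : |S i ⬝ᵥ S k| ≤ 1 := not_lt.mp fun h => hnear ⟨i, k, hik, h⟩
      rw [hz, abs_le, Fintype.card_fin] at habs
      norm_cast at habs
      have hz' : z = -3 ∨ z = -2 := by omega
      rcases hz' with rfl | rfl <;> rw [hz] <;> norm_num
    obtain ⟨s, hs, hgram⟩ :=
      exists_mul_transpose_eq_of_sq_dotProduct_eq_one (by simp) hS hrows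
    have hcorr (j : Fin 5) : (s ᵥ* S) j ^ 2 = 9 := by
      rw [sq_vecMul_eq_of_mul_transpose_eq (by simp) hS hs hgram]
      norm_num
    refine (schurNorm_map_ofReal_le_of_le_sq_vecMul (by simp) hS hs fun j => ?_).trans_eq ?_
    · rw [hcorr]
      norm_num
    · norm_num

theorem schurNorm_map_ofReal_le_of_abs_le_one {M : Matrix (Fin 5) (Fin 5) ℝ}
    (hM : ∀ i j, |M i j| ≤ 1) : (M.map Complex.ofReal).schurNorm ≤ 11 / 5 :=
  schurNorm_le_of_forall_sign (fun _ => schurNorm_map_ofReal_le_of_sign) hM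

end FiveByFive

/-- `r 5 = 11 / 5`, and the maximum is attained by the circulant matrix with diagonal
entries `1` and off-diagonal entries `-1`. -/
theorem rSchur_five :
    rSchur 5 = 11 / 5 ∧
      Matrix.schurNorm ((Matrix.of fun i j : Fin 5 =>
        if i = j then (1 : ℝ) else -1).map Complex.ofReal) = 11 / 5 := by
  have hentries (i j : Fin 5) :
      |(Matrix.of fun i j : Fin 5 => if i = j then (1 : ℝ) else -1) i j| ≤ 1 := by
    simp only [Matrix.of_apply]
    split_ifs <;> simp
  have hattained : Matrix.schurNorm ((Matrix.of fun i j : Fin 5 =>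
      if i = j then (1 : ℝ) else -1).map Complex.ofReal) = 11 / 5 :=
    le_antisymm (schurNorm_map_ofReal_le_of_abs_le_one hentries)
      (le_of_eq_of_le (by norm_num) three_sub_four_div_card_le_schurNorm)
  refine ⟨IsGreatest.csSup_eq ⟨⟨_, hentries, hattained.symm⟩, ?_⟩, hattained⟩
  rintro _ ⟨M, hM, rfl⟩
  exact schurNorm_map_ofReal_le_of_abs_le_one hM
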